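/- arXiv:2301.00700 — 10 statements merged into one kernel-verified Lean document; each statement's English description precedes it below -/
import Mathlib

section
/- Let R be a commutative semiring, M and N modules over R, and suppose the linear maps cup : R →ₗ[R] M ⊗[R] N and cap : N ⊗[R] M →ₗ[R] R satisfy the two zig-zag identities. Then M is a finitely generated R-module (Module.Finite R M). -/
open TensorProduct

/-- If `cup` and `cap` satisfy the two zig-zag identities, then `M` is a finitely
generated `R`-module. -/
theorem finite_of_zigzag {R : Type*} [CommSemiring R] {M N : Type*}
    [AddCommMonoid M] [Module R M] [AddCommMonoid N] [Module R N]
    (cup : R →ₗ[R] M ⊗[R] N) (cap : N ⊗[R] M →ₗ[R] R)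
    (zig : ∀ m : M,
      (TensorProduct.rid R M)
        ((LinearMap.lTensor M cap)
          ((TensorProduct.assoc R M N M)
            ((LinearMap.rTensor M cup) ((TensorProduct.lid R M).symm m)))) = m)
    (zag : ∀ n : N,
      (TensorProduct.lid R N)
        ((LinearMap.rTensor N cap)
          ((TensorProduct.assoc R N M N).symm
            ((LinearMap.lTensor N cup) ((TensorProduct.rid R N).symm n)))) = n) :
    Module.Finite R M := by
  classical
  obtain ⟨S, hS⟩ := TensorProduct.exists_finset (cup 1)
  refine ⟨⟨S.image Prod.fst, ?_⟩⟩
  rw [eq_top_iff]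
  intro m _
  rw [← zig m]
  simp only [TensorProduct.lid_symm_apply, LinearMap.rTensor_tmul, hS, TensorProduct.sum_tmul,
    map_sum, TensorProduct.assoc_tmul, LinearMap.lTensor_tmul, TensorProduct.rid_tmul]
  refine Submodule.sum_mem _ fun i hi => Submodule.smul_mem _ _ (Submodule.subset_span ?_)
  exact Finset.mem_coe.mpr (Finset.mem_image_of_mem _ hi)
end

section
/- Let R be a commutative semiring, M and N modules over R, and suppose the linear maps cup : R →ₗ[R] M ⊗[R] N and cap : N ⊗[R] M →ₗ[R] R satisfy the two zig-zag identities. Then M is a projective R-module (Module.Projective R M). -/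
open TensorProduct

/-- If `cup` and `cap` satisfy the two zig-zag identities, then `M` is a projective
`R`-module. -/
theorem projective_of_zigzag {R : Type*} [CommSemiring R] {M N : Type*}
    [AddCommMonoid M] [Module R M] [AddCommMonoid N] [Module R N]
    (cup : R →ₗ[R] M ⊗[R] N) (cap : N ⊗[R] M →ₗ[R] R)
    (zig : ∀ m : M,
      (TensorProduct.rid R M)
        ((LinearMap.lTensor M cap)
          ((TensorProduct.assoc R M N M)
            ((LinearMap.rTensor M cup) ((TensorProduct.lid R M).symm m)))) = m)
    (zag : ∀ n : N,
      (TensorProduct.lid R N)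
        ((LinearMap.rTensor N cap)
          ((TensorProduct.assoc R N M N).symm
            ((LinearMap.lTensor N cup) ((TensorProduct.rid R N).symm n)))) = n) :
    Module.Projective R M := by
  have key : ∀ t : M ⊗[R] N, ∃ s : M →ₗ[R] M →₀ R, ∀ m : M,
      Finsupp.linearCombination R (id : M → M) (s m) =
        (TensorProduct.rid R M) ((LinearMap.lTensor M cap)
          ((TensorProduct.assoc R M N M) (t ⊗ₜ[R] m))) := by
    intro t
    induction t using TensorProduct.induction_on with
    | zero => exact ⟨0, fun m => by simp⟩
    | tmul x n =>
      exact ⟨(Finsupp.lsingle x).comp (cap.comp (TensorProduct.mk R N M n)), fun m => by simp⟩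
    | add a b ha hb =>
      obtain ⟨s, hs⟩ := ha
      obtain ⟨s', hs'⟩ := hb
      exact ⟨s + s', fun m => by simp only [LinearMap.add_apply, map_add, hs, hs', TensorProduct.add_tmul]⟩
  obtain ⟨s, hs⟩ := key (cup 1)
  refine ⟨s, fun m => ?_⟩
  rw [hs m]
  simpa using zig m
end

section
/- Let R be a commutative semiring, M and N modules over R, and suppose the linear maps cup : R →ₗ[R] M ⊗[R] N and cap : N ⊗[R] M →ₗ[R] R satisfy the two zig-zag identities. Then the linear map ψ : N →ₗ[R] Module.Dual R M defined by ψ(n)(m) = cap(n ⊗ m) is bijective; in particular N is isomorphic as an R-module to the dual module Module.Dual R M. -/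
open TensorProduct

/-- If `cup` and `cap` satisfy the two zig-zag identities, then the map
`ψ : N →ₗ[R] Module.Dual R M` given by `ψ n m = cap (n ⊗ₜ m)` is bijective;
in particular `N` is isomorphic to the dual module of `M`. -/
theorem bijective_psi_of_zigzag {R : Type*} [CommSemiring R] {M N : Type*}
    [AddCommMonoid M] [Module R M] [AddCommMonoid N] [Module R N]
    (cup : R →ₗ[R] M ⊗[R] N) (cap : N ⊗[R] M →ₗ[R] R)
    (zig : ∀ m : M,
      (TensorProduct.rid R M)
        ((LinearMap.lTensor M cap)
          ((TensorProduct.assoc R M N M)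
            ((LinearMap.rTensor M cup) ((TensorProduct.lid R M).symm m)))) = m)
    (zag : ∀ n : N,
      (TensorProduct.lid R N)
        ((LinearMap.rTensor N cap)
          ((TensorProduct.assoc R N M N).symm
            ((LinearMap.lTensor N cup) ((TensorProduct.rid R N).symm n)))) = n)
    (ψ : N →ₗ[R] Module.Dual R M)
    (hψ : ∀ (n : N) (m : M), ψ n m = cap (n ⊗ₜ[R] m)) :
    Function.Bijective ψ := by
  have key1 : ∀ (t : M ⊗[R] N) (n : N),
      (TensorProduct.lid R N) ((LinearMap.rTensor N cap)
        ((TensorProduct.assoc R N M N).symm (n ⊗ₜ[R] t)))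
        = (TensorProduct.lid R N) ((LinearMap.rTensor N (ψ n)) t) := by
    intro t n
    induction t using TensorProduct.induction_on with
    | zero => simp
    | tmul a b => simp [hψ]
    | add x y hx hy => simp only [TensorProduct.tmul_add, map_add, hx, hy]
  have key2 : ∀ (t : M ⊗[R] N) (f : Module.Dual R M) (m : M),
      f ((TensorProduct.rid R M) ((LinearMap.lTensor M cap)
        ((TensorProduct.assoc R M N M) (t ⊗ₜ[R] m))))
        = ψ ((TensorProduct.lid R N) ((LinearMap.rTensor N f) t)) m := by
    intro t f m
    induction t using TensorProduct.induction_on with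
    | zero => simp
    | tmul a b => simp [hψ, mul_comm]
    | add x y hx hy =>
      simp only [TensorProduct.add_tmul, map_add, hx, hy, LinearMap.add_apply]
  refine Function.bijective_iff_has_inverse.mpr
    ⟨fun f => (TensorProduct.lid R N) ((LinearMap.rTensor N f) (cup 1)), ?_, ?_⟩
  · intro n
    have h := zag n
    rw [TensorProduct.rid_symm_apply, LinearMap.lTensor_tmul, key1] at h
    exact h
  · intro f
    ext m
    have h := zig m
    rw [TensorProduct.lid_symm_apply, LinearMap.rTensor_tmul] at h
    have h2 := key2 (cup 1) f m
    rw [h] at h2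
    exact h2.symm
end

section
/- Let R be a commutative semiring and P a finitely generated projective R-module. Let cap : Module.Dual R P ⊗[R] P →ₗ[R] R be the canonical evaluation map sending f ⊗ m to f(m). Then there exists a linear map cup : R →ₗ[R] P ⊗[R] Module.Dual R P such that cup and cap satisfy the two zig-zag identities. -/
open TensorProduct

/-- For a finitely generated projective module `P` over a commutative semiring `R`,
the canonical evaluation map `cap : Dual R P ⊗ P → R`, `f ⊗ m ↦ f m`, admits a
coevaluation map `cup : R → P ⊗ Dual R P` satisfying the two zig-zag identities. -/
theorem exists_coevaluation {R : Type*} [CommSemiring R] {P : Type*}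
    [AddCommMonoid P] [Module R P] [Module.Finite R P] [Module.Projective R P]
    (cap : Module.Dual R P ⊗[R] P →ₗ[R] R)
    (hcap : ∀ (f : Module.Dual R P) (m : P), cap (f ⊗ₜ[R] m) = f m) :
    ∃ cup : R →ₗ[R] P ⊗[R] Module.Dual R P,
      (∀ m : P,
        (TensorProduct.rid R P)
          ((LinearMap.lTensor P cap)
            ((TensorProduct.assoc R P (Module.Dual R P) P)
              ((LinearMap.rTensor P cup) ((TensorProduct.lid R P).symm m)))) = m) ∧
      (∀ f : Module.Dual R P,
        (TensorProduct.lid R (Module.Dual R P))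
          ((LinearMap.rTensor (Module.Dual R P) cap)
            ((TensorProduct.assoc R (Module.Dual R P) P (Module.Dual R P)).symm
              ((LinearMap.lTensor (Module.Dual R P) cup)
                ((TensorProduct.rid R (Module.Dual R P)).symm f)))) = f) := by
  obtain ⟨n, p, g, -, -, hpg⟩ := Module.Finite.exists_comp_eq_id_of_projective R P
  let e : Fin n → P := fun i => p (Pi.single i 1)
  let φ : Fin n → Module.Dual R P := fun i => (LinearMap.proj i).comp g
  have key : ∀ m : P, ∑ i, φ i m • e i = m := by
    intro m
    have h1 : p (g m) = m := LinearMap.congr_fun hpg m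
    have h2 : g m = ∑ i, (g m i) • (Pi.single i (1 : R) : Fin n → R) :=
      pi_eq_sum_univ' (g m)
    calc ∑ i, φ i m • e i = p (∑ i, (g m i) • (Pi.single i (1 : R) : Fin n → R)) := by
          simp only [map_sum, map_smul]; rfl
      _ = m := by rw [← h2, h1]
  refine ⟨LinearMap.toSpanSingleton R _ (∑ i, e i ⊗ₜ[R] φ i), fun m => ?_, fun f => ?_⟩
  · simp [TensorProduct.sum_tmul, hcap, key]
  · simp only [TensorProduct.rid_symm_apply, LinearMap.lTensor_tmul,
      LinearMap.toSpanSingleton_apply, one_smul, TensorProduct.tmul_sum, map_sum,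
      TensorProduct.assoc_symm_tmul, LinearMap.rTensor_tmul, hcap, TensorProduct.lid_tmul]
    ext m
    conv_rhs => rw [← key m]
    simp [mul_comm]
end

section
/- For every NFA M over an alphabet α with state type σ and all words u, v : List α, one has u ++ v ∈ traceLang M if and only if v ++ u ∈ traceLang M; that is, the trace language of an NFA is a circular language. -/
/-- The trace language of an NFA: the set of words read along some cycle. -/
def traceLang {α σ : Type*} (M : NFA α σ) : Language α :=
  {ω : List α | ∃ q : σ, q ∈ M.evalFrom {q} ω}

theorem traceLang_rotate_aux {α σ : Type*} (M : NFA α σ) (u v : List α)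
    (h : u ++ v ∈ traceLang M) : v ++ u ∈ traceLang M := by
  obtain ⟨q, hq⟩ := h
  rw [NFA.evalFrom_append, NFA.mem_evalFrom_iff_exists] at hq
  obtain ⟨t, ht, hqt⟩ := hq
  refine ⟨t, ?_⟩
  rw [NFA.evalFrom_append, NFA.mem_evalFrom_iff_exists]
  exact ⟨q, hqt, ht⟩

/-- The trace language of an NFA is a circular language. -/
theorem traceLang_circular {α σ : Type*} (M : NFA α σ) (u v : List α) :
    u ++ v ∈ traceLang M ↔ v ++ u ∈ traceLang M :=
  ⟨traceLang_rotate_aux M u v, traceLang_rotate_aux M v u⟩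
end

section
/- For every NFA M over an alphabet α whose state type σ is a Fintype, the trace language traceLang M is a regular language (it is accepted by some DFA with a finite state type). -/
/-- The DFA tracking, for each state `q`, the set of states reachable from `q`. -/
def traceDFA {α σ : Type*} (M : NFA α σ) : DFA α (σ → Set σ) where
  step f a := fun q => M.stepSet (f q) a
  start := fun q => {q}
  accept := {f | ∃ q, q ∈ f q}

theorem traceDFA_evalFrom {α σ : Type*} (M : NFA α σ) (w : List α) (f : σ → Set σ) :
    (traceDFA M).evalFrom f w = fun q => M.evalFrom (f q) w := by
  induction w generalizing f with
  | nil => rfl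
  | cons a w ih => exact ih _

/-- The trace language of an NFA with finitely many states is regular. -/
theorem traceLang_isRegular {α : Type} {σ : Type*} [Fintype σ] (M : NFA α σ) :
    Language.IsRegular (traceLang M) := by
  classical
  refine Language.isRegular_iff.2 ⟨σ → Set σ, inferInstance, traceDFA M, ?_⟩
  ext w
  change (∃ q, q ∈ (traceDFA M).evalFrom (fun q => {q}) w q) ↔ ∃ q, q ∈ M.evalFrom {q} w
  rw [traceDFA_evalFrom]
end

section
/- Let M be an NFA over α with state type σ, where σ is a Fintype with Fintype.card σ = k, and let a : α. If there exist states q, q' : σ with q' ∈ M.evalFrom {q} (List.replicate k a), then there exists m : ℕ with 1 ≤ m, m ≤ k, and List.replicate m a ∈ traceLang M; that is, a path reading a^k forces a cycle reading a^m for some 1 ≤ m ≤ k. -/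
theorem exists_run {α σ : Type*} (M : NFA α σ) (a : α) (n : ℕ) :
    ∀ q q' : σ, q' ∈ M.evalFrom {q} (List.replicate n a) →
      ∃ f : ℕ → σ, f 0 = q ∧ ∀ i < n, f (i + 1) ∈ M.step (f i) a := by
  induction n with
  | zero => exact fun q _ _ => ⟨fun _ => q, rfl, by simp⟩
  | succ n ih =>
    intro q q' h
    rw [List.replicate_succ, NFA.evalFrom_cons, NFA.stepSet_singleton,
      NFA.mem_evalFrom_iff_exists] at h
    obtain ⟨t, ht, h⟩ := h
    obtain ⟨f, h0, hf⟩ := ih t q' h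
    refine ⟨fun i => Nat.casesOn i q f, rfl, ?_⟩
    intro i hi
    cases i with
    | zero => simpa [h0] using ht
    | succ i => exact hf i (by omega)

theorem run_segment {α σ : Type*} (M : NFA α σ) (a : α) (n : ℕ) (f : ℕ → σ)
    (hf : ∀ i < n, f (i + 1) ∈ M.step (f i) a) (i d : ℕ) (h : i + d ≤ n) :
    f (i + d) ∈ M.evalFrom {f i} (List.replicate d a) := by
  induction d with
  | zero => simp
  | succ d ih =>
    rw [List.replicate_succ', NFA.evalFrom_append, NFA.evalFrom_singleton, NFA.mem_stepSet]
    exact ⟨_, ih (by omega), hf (i + d) (by omega)⟩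

/-- A path reading `a^k` in an automaton with `k` states forces a cycle reading
`a^m` for some `1 ≤ m ≤ k`. -/
theorem replicate_mem_traceLang_of_path {α σ : Type*} [Fintype σ]
    (M : NFA α σ) (k : ℕ) (hk : Fintype.card σ = k) (a : α) (q q' : σ)
    (h : q' ∈ M.evalFrom {q} (List.replicate k a)) :
    ∃ m : ℕ, 1 ≤ m ∧ m ≤ k ∧ List.replicate m a ∈ traceLang M := by
  obtain ⟨f, -, hf⟩ := exists_run M a k q q' h
  obtain ⟨i, j, hij, he⟩ := Fintype.exists_ne_map_eq_of_card_lt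
    (fun i : Fin (k + 1) => f i) (by simp [hk])
  have key : ∀ i j : ℕ, i < j → j ≤ k → f i = f j →
      ∃ m : ℕ, 1 ≤ m ∧ m ≤ k ∧ List.replicate m a ∈ traceLang M := by
    intro i j hlt hj he
    refine ⟨j - i, by omega, by omega, f i, ?_⟩
    have := run_segment M a k f hf i (j - i) (by omega)
    rwa [show i + (j - i) = j by omega, ← he] at this
  have hne : (i : ℕ) ≠ j := fun h => hij (Fin.ext h)
  rcases Nat.lt_or_gt_of_ne hne with h1 | h1
  · exact key i j h1 (by omega) he
  · exact key j i h1 (by omega) he.symm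
end

section
/- For every nonempty finite distributive lattice α there exist a finite topological space X and an order isomorphism between α and the lattice Opens X of open subsets of X (ordered by inclusion, with join given by union and meet by intersection). -/
/-- Every nonempty finite distributive lattice is order-isomorphic to the
lattice of open sets of a finite topological space. -/
theorem finite_distribLattice_iso_opens (α : Type*)
    [DistribLattice α] [Fintype α] [Nonempty α] :
    ∃ (X : Type) (tX : TopologicalSpace X) (_ : Fintype X),
      Nonempty (α ≃o @TopologicalSpace.Opens X tX) := by
  classical
  let : OrderBot α := Fintype.toOrderBot α
  let e := Fintype.equivFin {a : α // SupIrred a}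
  let tX : TopologicalSpace (Fin (Fintype.card {a : α // SupIrred a})) :=
    (Topology.lowerSet {a : α // SupIrred a}).coinduced e
  refine ⟨_, tX, inferInstance, ⟨OrderIso.lowerSetSupIrred.trans ?_⟩⟩
  exact
    { toFun := fun s => ⟨e.symm ⁻¹' (s : Set _), by
        change IsLowerSet (e ⁻¹' (e.symm ⁻¹' (s : Set _)))
        rw [← Set.preimage_comp, Equiv.symm_comp_self]
        exact s.lower⟩
      invFun := fun u => ⟨e ⁻¹' u.carrier, u.is_open'⟩
      left_inv := fun s => by
        ext x
        change e.symm (e x) ∈ s ↔ x ∈ s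
        rw [e.symm_apply_apply]
      right_inv := fun u => by
        ext x
        change e (e.symm x) ∈ u ↔ x ∈ u
        rw [e.apply_symm_apply]
      map_rel_iff' := by
        intro s t
        constructor
        · intro h x hx
          have hx' : e.symm (e x) ∈ s := by rwa [e.symm_apply_apply]
          have h2 : e.symm (e x) ∈ t := h hx'
          rwa [e.symm_apply_apply] at h2
        · intro h x hx
          exact h hx }
end

section
/- Let X be a finite topological space. An open set U : Opens X is sup-irreducible (SupIrred: U is not the bottom element and whenever U = V ⊔ W one has U = V or U = W) if and only if there exists x : X with U = U_x, the minimal open neighborhood of x. -/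
open TopologicalSpace

/-- The minimal open neighborhood of a point in a finite topological space:
the intersection of all open sets containing it. -/
def minOpen {X : Type*} [TopologicalSpace X] [Fintype X] (x : X) : Opens X :=
  ⟨⋂₀ {U : Set X | IsOpen U ∧ x ∈ U},
    (Set.toFinite _).isOpen_sInter fun _ hU => hU.1⟩

theorem mem_minOpen_self {X : Type*} [TopologicalSpace X] [Fintype X] (x : X) :
    x ∈ minOpen x := by
  intro V hV
  exact hV.2

theorem minOpen_le {X : Type*} [TopologicalSpace X] [Fintype X] {x : X} {U : Opens X}
    (h : x ∈ U) : minOpen x ≤ U := by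
  intro y hy
  exact hy (U : Set X) ⟨U.isOpen, h⟩

/-- In a finite topological space, an open set is sup-irreducible in the
lattice of opens if and only if it is the minimal open neighborhood of some
point. -/
theorem supIrred_iff_minOpen {X : Type*} [TopologicalSpace X] [Fintype X]
    (U : Opens X) :
    SupIrred U ↔ ∃ x : X, U = minOpen x := by
  classical
  constructor
  · intro h
    have hs : (Finset.univ.filter (fun x : X => x ∈ U)).sup minOpen = U := by
      apply le_antisymm
      · apply Finset.sup_le
        intro x hx
        exact minOpen_le (Finset.mem_filter.mp hx).2
      · intro x hx
        have hle : minOpen x ≤ (Finset.univ.filter (fun x : X => x ∈ U)).sup minOpen :=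
          Finset.le_sup (f := minOpen) (Finset.mem_filter.mpr ⟨Finset.mem_univ x, hx⟩)
        exact hle (mem_minOpen_self x)
    obtain ⟨x, -, hx⟩ := h.finset_sup_eq hs
    exact ⟨x, hx.symm⟩
  · rintro ⟨x, rfl⟩
    refine ⟨?_, ?_⟩
    · intro hb
      have hx := mem_minOpen_self x
      rw [hb.eq_bot] at hx
      exact hx
    · intro V W hVW
      have hx : x ∈ V ⊔ W := hVW ▸ mem_minOpen_self x
      rcases hx with hx | hx
      · exact Or.inl (le_antisymm (hVW ▸ le_sup_left) (minOpen_le hx))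
      · exact Or.inr (le_antisymm (hVW ▸ le_sup_right) (minOpen_le hx))
end

section
/- Let X be a finite topological space, X_in an open subset of X, X_t a closed subset of X, and for each letter a : α let m a : Opens X → Opens X preserve finite unions (m a (U ⊔ V) = m a U ⊔ m a V and m a ⊥ = ⊥). For a word ω = [a₁, …, aₙ] let m_ω := m a₁ ∘ ⋯ ∘ m aₙ (the identity for the empty word). Then both the interval language L_I := {ω : List α | X_t ∩ (m_ω X_in : Set X) ≠ ∅} and the trace language L∘ := {ω : List α | ∃ x : X, x ∈ m_ω (U_x)} are regular languages (each is accepted by some DFA with a finite state type). -/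
open TopologicalSpace

/-- For a word `ω = [a₁, …, aₙ]`, the composite `m a₁ ∘ ⋯ ∘ m aₙ`
(the identity for the empty word). -/
def mWord {α X : Type*} [TopologicalSpace X]
    (m : α → Opens X → Opens X) : List α → Opens X → Opens X :=
  fun ω => ω.foldr (fun a g => m a ∘ g) id

theorem isRegular_of_mWord {α : Type} {X : Type*} [TopologicalSpace X] [Fintype X]
    (m : α → Opens X → Opens X) (S : Set (Opens X → Opens X)) :
    Language.IsRegular ({ω : List α | mWord m ω ∈ S} : Language α) := by
  classical
  have : Finite (Opens X) := Finite.of_injective (fun U : Opens X => (U : Set X))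
    SetLike.coe_injective
  let _ : Fintype (Opens X → Opens X) := Fintype.ofFinite _
  refine Language.isRegular_iff.mpr ?_
  let M : DFA α (Opens X → Opens X) := ⟨fun g a => g ∘ m a, id, S⟩
  have key : ∀ (ω : List α) (g : Opens X → Opens X),
      ω.foldl (fun g a => g ∘ m a) g = g ∘ mWord m ω := by
    intro ω
    induction ω with
    | nil => intro g; rfl
    | cons a t ih => intro g; rw [List.foldl_cons, ih]; rfl
  refine ⟨_, inferInstance, M, ?_⟩
  ext ω
  change ω.foldl (fun g a => g ∘ m a) id ∈ S ↔ mWord m ω ∈ S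
  rw [key]; rfl

/-- The interval language and the trace language of a 𝒯-automaton (a finite
topological space with an initial open set, an accepting closed set and
union-preserving actions of the letters) are regular languages. -/
theorem tAutomaton_languages_isRegular {α : Type} {X : Type*}
    [TopologicalSpace X] [Fintype X]
    (m : α → Opens X → Opens X)
    (hm : ∀ (a : α) (U V : Opens X), m a (U ⊔ V) = m a U ⊔ m a V)
    (hm0 : ∀ a : α, m a ⊥ = ⊥)
    (Xin : Opens X) (Xt : Set X) (hXt : IsClosed Xt) :
    Language.IsRegular
      ({ω : List α | Xt ∩ (mWord m ω Xin : Set X) ≠ ∅} : Language α) ∧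
    Language.IsRegular
      ({ω : List α | ∃ x : X, x ∈ mWord m ω (minOpen x)} : Language α) := by
  exact ⟨isRegular_of_mWord m {g | Xt ∩ (g Xin : Set X) ≠ ∅},
    isRegular_of_mWord m {g | ∃ x : X, x ∈ g (minOpen x)}⟩
end
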